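/- For every nonnegative integer n, the n-th elementary symmetric function evaluated at the sequence (1/1², 1/2², 1/3², …) equals π^{2n}/(2n+1)!; that is, ∑_{1 ≤ i₁ < i₂ < ⋯ < iₙ} 1/(i₁² i₂² ⋯ iₙ²) = π^{2n}/(2n+1)!. -/

import Mathlib

open Real

noncomputable def eaux (n : ℕ) : ℂ :=
  ∑' s : {s : Finset ℕ+ // s.card = n}, ∏ i ∈ s.1, (1 : ℂ) / ((i : ℕ) : ℂ) ^ 2

theorem summable_sets (z : ℂ) :
    Summable (fun s : Finset ℕ+ => ∏ i ∈ s, (z * (1 / ((i : ℕ) : ℂ) ^ 2))) := by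
  apply summable_finsetProd_of_summable_norm
  have h : Summable (fun n : ℕ => ‖z‖ * (1 / (n : ℝ) ^ 2)) :=
    (Real.summable_one_div_nat_pow.mpr one_lt_two).mul_left _
  have h2 := h.comp_injective PNat.coe_injective
  refine h2.congr fun i => ?_
  simp

theorem hasSum_eaux (z : ℂ) :
    HasSum (fun n : ℕ => z ^ n * eaux n)
      (∑' s : Finset ℕ+, ∏ i ∈ s, (z * (1 / ((i : ℕ) : ℂ) ^ 2))) := by
  have h := (summable_sets z).hasSum
  rw [← (Equiv.sigmaFiberEquiv (Finset.card : Finset ℕ+ → ℕ)).hasSum_iff] at h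
  refine h.sigma fun n => ?_
  have h1 : Summable (fun s : {s : Finset ℕ+ // s.card = n} =>
      ∏ i ∈ s.1, (1 : ℂ) / ((i : ℕ) : ℂ) ^ 2) := by
    have := (summable_sets 1).comp_injective
      (Subtype.val_injective (p := fun s : Finset ℕ+ => s.card = n))
    refine this.congr fun s => ?_
    simp
  refine (h1.hasSum.mul_left (z ^ n)).congr_fun ?_
  intro s
  simp only [Function.comp, Equiv.sigmaFiberEquiv_apply, Finset.prod_mul_distrib,
    Finset.prod_const, s.2]

theorem sum_sets_eq (t : ℂ) (ht : t ≠ 0) :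
    (∑' s : Finset ℕ+, ∏ i ∈ s, ((-t ^ 2) * (1 / ((i : ℕ) : ℂ) ^ 2)))
      = Complex.sin (π * t) / (π * t) := by
  have h := hasProd_one_add_of_hasSum_prod (summable_sets (-t ^ 2)).hasSum
  rw [← Equiv.pnatEquivNat.symm.hasProd_iff] at h
  refine tendsto_nhds_unique h.tendsto_prod_nat ?_
  refine (tendsto_euler_sin_prod' ht).congr fun n => Finset.prod_congr rfl fun i _ => ?_
  simp [sineTerm, div_eq_mul_inv]

theorem hasSum_sinc (t : ℂ) (ht : t ≠ 0) :
    HasSum (fun n : ℕ => (-t ^ 2) ^ n * ((π : ℂ) ^ (2 * n) / (Nat.factorial (2 * n + 1) : ℂ)))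
      (Complex.sin (π * t) / (π * t)) := by
  have hp : (π : ℂ) ≠ 0 := by exact_mod_cast Real.pi_ne_zero
  refine ((Complex.hasSum_sin (π * t)).div_const (π * t)).congr_fun ?_
  intro n
  rw [neg_pow, ← pow_mul, pow_succ, mul_pow]
  field_simp

theorem eaux_zero : eaux 0 = 1 := by
  have h := hasSum_eaux 0
  have h1 : (∑' s : Finset ℕ+, ∏ i ∈ s, ((0 : ℂ) * (1 / ((i : ℕ) : ℂ) ^ 2))) = 1 := by
    rw [tsum_eq_single ∅]
    · simp
    · intro s hs
      obtain ⟨i, hi⟩ := Finset.nonempty_iff_ne_empty.mpr hs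
      exact Finset.prod_eq_zero hi (by simp)
  rw [h1] at h
  have h2 := hasSum_single (f := fun n : ℕ => (0 : ℂ) ^ n * eaux n) 0 (by
    intro n hn; simp [hn])
  simpa using h2.unique h

theorem eaux_eq (n : ℕ) : eaux n = (π : ℂ) ^ (2 * n) / (Nat.factorial (2 * n + 1) : ℂ) := by
  set d : ℕ → ℂ := fun n => (π : ℂ) ^ (2 * n) / (Nat.factorial (2 * n + 1) : ℂ) with hd
  let F : ℂ → ℂ := fun z => ∑' s : Finset ℕ+, ∏ i ∈ s, (z * (1 / ((i : ℕ) : ℂ) ^ 2))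
  have h1 : HasFPowerSeriesAt F (FormalMultilinearSeries.ofScalars ℂ eaux) 0 := by
    rw [hasFPowerSeriesAt_iff]
    refine Filter.Eventually.of_forall fun z => ?_
    simp only [FormalMultilinearSeries.coeff_ofScalars, zero_add, smul_eq_mul]
    exact hasSum_eaux z
  have h2 : HasFPowerSeriesAt F (FormalMultilinearSeries.ofScalars ℂ d) 0 := by
    rw [hasFPowerSeriesAt_iff]
    refine Filter.Eventually.of_forall fun z => ?_
    simp only [FormalMultilinearSeries.coeff_ofScalars, zero_add, smul_eq_mul]
    by_cases hz : z = 0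
    · subst hz
      have e : ∀ c : ℕ → ℂ, HasSum (fun n : ℕ => (0 : ℂ) ^ n * c n) (c 0) := fun c => by
        have := hasSum_single (f := fun n : ℕ => (0 : ℂ) ^ n * c n) 0 (by
          intro n hn; simp [hn])
        simpa using this
      have hF : F 0 = d 0 := by
        rw [(hasSum_eaux 0).unique (e eaux) |> (show F 0 = eaux 0 from ·), eaux_zero]
        simp [hd]
      rw [hF]
      exact e d
    · obtain ⟨t, ht⟩ := IsAlgClosed.exists_pow_nat_eq (-z) (n := 2) two_pos
      have ht0 : t ≠ 0 := by
        rintro rfl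
        apply hz
        simpa using ht.symm
      have hz' : z = -t ^ 2 := by rw [ht, neg_neg]
      have : F z = Complex.sin (π * t) / (π * t) := by
        rw [hz']; exact sum_sets_eq t ht0
      rw [this, hz']
      exact hasSum_sinc t ht0
  have h3 := h1.eq_formalMultilinearSeries h2
  have h4 := congrArg (fun p => FormalMultilinearSeries.coeff p n) h3
  simpa only [FormalMultilinearSeries.coeff_ofScalars] using h4

noncomputable def tupleEquiv (n : ℕ) :
    {f : Fin n → ℕ+ // StrictMono f} ≃ {s : Finset ℕ+ // s.card = n} :=
  Equiv.ofBijective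
    (fun f => ⟨Finset.univ.map ⟨f.1, f.2.injective⟩, by simp⟩) (by
      constructor
      · intro f g h
        have h' := congrArg (fun s : {s : Finset ℕ+ // s.card = n} => (s.1 : Set ℕ+)) h
        simp only [Finset.coe_map, Finset.coe_univ, Set.image_univ,
          Function.Embedding.coeFn_mk] at h'
        exact Subtype.ext ((StrictMono.range_inj f.2 g.2).mp h')
      · rintro ⟨s, hs⟩
        refine ⟨⟨s.orderEmbOfFin hs, (s.orderEmbOfFin hs).strictMono⟩, ?_⟩
        exact Subtype.ext (Finset.map_orderEmbOfFin_univ s hs))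

/-- The `n`-th elementary symmetric function of `(1/1², 1/2², …)`, as a sum over
strictly increasing `n`-tuples of positive integers. -/
theorem esymm_inv_squares (n : ℕ) :
    (∑' f : {f : Fin n → ℕ+ // StrictMono f}, ∏ k : Fin n, (1 : ℝ) / ((f.1 k : ℕ) : ℝ) ^ 2)
      = π ^ (2 * n) / (Nat.factorial (2 * n + 1) : ℝ) := by
  have h := eaux_eq n
  rw [eaux, ← (tupleEquiv n).tsum_eq] at h
  apply Complex.ofReal_injective
  push_cast
  rw [← h]
  refine tsum_congr fun f => ?_
  have hf : ((tupleEquiv n) f).1 = Finset.univ.map ⟨f.1, f.2.injective⟩ := rfl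
  rw [hf, Finset.prod_map]
  rfl
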